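/- arXiv:1605.01581 — 2 statements merged into one kernel-verified Lean document; each statement's English description precedes it below -/
import Mathlib

section
/- Let ℓ : ℝ → ℝ be a smooth function with compact support, set p = (1/(2π)) ∫_ℝ ℓ(s) ds, and let L : ℝ → ℝ satisfy L'(s) = ℓ(s)/π for every s ∈ ℝ. Fix q ∈ ℝ and define c : ℝ → ℂ by c(t) = exp(−i q ∫_ℝ (L(s) − L(s − t)) ds). Then c is the restriction to ℝ of the entire function z ↦ exp(−2 i q p z); in particular, for every β > 0 the analytic continuation of c at the point z = iβ equals e^{2βqp}. -/
open MeasureTheory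

/-- With `ℓ` smooth of compact support, `p = (1/(2π)) ∫ ℓ`,
`L` a primitive of `ℓ/π` and `q ∈ ℝ`, the function
`c t = exp(-i q ∫ (L s - L (s - t)) ds)` is the restriction to `ℝ` of the
entire function `z ↦ exp(-2 i q p z)`; in particular for every `β > 0` the
analytic continuation of `c` at `z = iβ` equals `e^{2βqp}`. -/
theorem chemical_potential_analytic_continuation
    (ℓ L : ℝ → ℝ)
    (hℓ : ContDiff ℝ (⊤ : ℕ∞) ℓ)
    (hℓsupp : HasCompactSupport ℓ)
    (p : ℝ) (hp : p = (1 / (2 * Real.pi)) * ∫ s, ℓ s)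
    (hL : ∀ s : ℝ, HasDerivAt L (ℓ s / Real.pi) s)
    (q : ℝ)
    (c : ℝ → ℂ)
    (hc : ∀ t : ℝ, c t =
      Complex.exp (-Complex.I * (q : ℂ) * ((∫ s, (L s - L (s - t)) : ℝ) : ℂ))) :
    Differentiable ℂ (fun z : ℂ => Complex.exp (-2 * Complex.I * (q : ℂ) * (p : ℂ) * z)) ∧
    (∀ t : ℝ, c t = Complex.exp (-2 * Complex.I * (q : ℂ) * (p : ℂ) * (t : ℂ))) ∧
    (∀ β : ℝ, 0 < β →
      Complex.exp (-2 * Complex.I * (q : ℂ) * (p : ℂ) * (Complex.I * (β : ℂ)))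
        = (Real.exp (2 * β * q * p) : ℂ)) := by
  have hcont : Continuous ℓ := hℓ.continuous
  have hint : Integrable ℓ := hcont.integrable_of_hasCompactSupport hℓsupp
  have key : ∀ t : ℝ, (∫ s, (L s - L (s - t))) = 2 * p * t := by
    intro t
    have h1 : ∀ s : ℝ, L s - L (s - t) = ∫ u in (0:ℝ)..t, ℓ (s - u) / Real.pi := by
      intro s
      rw [intervalIntegral.integral_comp_sub_left (fun x => ℓ x / Real.pi) s, sub_zero]
      rw [intervalIntegral.integral_eq_sub_of_hasDerivAt (fun x _ => hL x)]
      exact (hcont.div_const _).intervalIntegrable _ _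
    have hprod : Integrable (Function.uncurry fun u s : ℝ => ℓ (s - u) / Real.pi)
        ((volume.restrict (Set.uIoc 0 t)).prod volume) := by
      have hm : Continuous (Function.uncurry fun u s : ℝ => ℓ (s - u) / Real.pi) := by
        unfold Function.uncurry
        fun_prop
      rw [integrable_prod_iff hm.aestronglyMeasurable]
      refine ⟨Filter.Eventually.of_forall fun u => (hint.comp_sub_right u).div_const _, ?_⟩
      have : (fun u : ℝ => ∫ s : ℝ, ‖Function.uncurry (fun u s : ℝ => ℓ (s - u) / Real.pi) (u, s)‖)
          = fun _ => ∫ s : ℝ, ‖ℓ s / Real.pi‖ := by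
        funext u
        exact integral_sub_right_eq_self (fun s => ‖ℓ s / Real.pi‖) u
      rw [this]
      have : IsFiniteMeasure (volume.restrict (Set.uIoc 0 t)) :=
        ⟨by simp [Set.uIoc]⟩
      exact integrable_const _
    simp_rw [h1]
    rw [← intervalIntegral_integral_swap hprod]
    have h2 : ∀ u : ℝ, (∫ s, ℓ (s - u) / Real.pi) = 2 * p := by
      intro u
      rw [integral_sub_right_eq_self (fun s => ℓ s / Real.pi) u, integral_div, hp]
      field_simp
    simp_rw [h2]
    simp
    ring
  refine ⟨by fun_prop, ?_, ?_⟩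
  · intro t
    rw [hc, key]
    congr 1
    push_cast
    ring
  · intro β _
    push_cast
    congr 1
    linear_combination (-2 * (q:ℂ) * p * β) * Complex.I_mul_I
end

section
/- Let A and B be unital C*-algebras with one-parameter groups of *-automorphisms τ¹ = (τ¹_t)_{t∈ℝ} and τ² = (τ²_t)_{t∈ℝ} respectively. Let φ be a β₁-KMS state for τ¹ on A and ψ a β₂-KMS state for τ² on B, and set β = min{β₁, β₂}. Then for all a, c ∈ A and b, d ∈ B there exists a function F : S̄_β → ℂ, bounded and continuous on S̄_β and holomorphic on S_β, such that F(t) = φ(a τ¹_t(c)) · ψ(b τ²_t(d)) for every t ∈ ℝ. -/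
open scoped ComplexOrder

/-- The open horizontal strip `S_β = {z : 0 < Im z < β}`. -/
def openStrip (β : ℝ) : Set ℂ := {z : ℂ | 0 < z.im ∧ z.im < β}

/-- The closed horizontal strip `S̄_β = {z : 0 ≤ Im z ≤ β}`. -/
def closedStrip (β : ℝ) : Set ℂ := {z : ℂ | 0 ≤ z.im ∧ z.im ≤ β}

/-- A state on a unital C*-algebra: a continuous linear functional `φ : A → ℂ`
with `φ (x* x) ≥ 0` for all `x` and `φ 1 = 1`. -/
def IsState (A : Type*) [NormedRing A] [StarRing A] [CStarRing A]
    [NormedAlgebra ℂ A] [CompleteSpace A] (φ : A → ℂ) : Prop :=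
  Continuous φ ∧ (∀ x y : A, φ (x + y) = φ x + φ y) ∧
    (∀ (c : ℂ) (x : A), φ (c • x) = c * φ x) ∧
    (∀ x : A, 0 ≤ φ (star x * x)) ∧ φ 1 = 1

/-- The KMS condition at inverse temperature `β` for a state `φ` with respect to a
one-parameter group `τ` of *-automorphisms. -/
def KMSCondition {A : Type*} [NormedRing A] [StarRing A] [CStarRing A]
    [NormedAlgebra ℂ A] [CompleteSpace A]
    (φ : A → ℂ) (τ : ℝ → A ≃⋆ₐ[ℂ] A) (β : ℝ) : Prop :=
  ∀ X Y : A, ∃ F : ℂ → ℂ,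
    (∃ C : ℝ, ∀ z ∈ closedStrip β, ‖F z‖ ≤ C) ∧
    ContinuousOn F (closedStrip β) ∧
    (∀ z ∈ openStrip β, DifferentiableAt ℂ F z) ∧
    (∀ t : ℝ, F (t : ℂ) = φ (X * τ t Y)) ∧
    (∀ t : ℝ, F ((t : ℂ) + (β : ℂ) * Complex.I) = φ (τ t Y * X))

/-- Let `φ` be a `β₁`-KMS state for `τ1` on `A` and `ψ` a
`β₂`-KMS state for `τ2` on `B`, and set `β = min β₁ β₂`. Then for all
`a, c ∈ A`, `b, d ∈ B` there is a function `F` bounded and continuous on `S̄_β`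
and holomorphic on `S_β` such that `F t = φ (a τ1_t(c)) · ψ (b τ2_t(d))` for all
real `t`. -/
theorem product_state_half_kms
    {A : Type*} [NormedRing A] [StarRing A] [CStarRing A]
    [NormedAlgebra ℂ A] [CompleteSpace A]
    {B : Type*} [NormedRing B] [StarRing B] [CStarRing B]
    [NormedAlgebra ℂ B] [CompleteSpace B]
    (τ1 : ℝ → A ≃⋆ₐ[ℂ] A)
    (hτ1_grp : ∀ s t : ℝ, ∀ x : A, τ1 (s + t) x = τ1 s (τ1 t x))
    (hτ1_zero : ∀ x : A, τ1 0 x = x)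
    (τ2 : ℝ → B ≃⋆ₐ[ℂ] B)
    (hτ2_grp : ∀ s t : ℝ, ∀ x : B, τ2 (s + t) x = τ2 s (τ2 t x))
    (hτ2_zero : ∀ x : B, τ2 0 x = x)
    (β₁ β₂ : ℝ) (hβ₁ : 0 < β₁) (hβ₂ : 0 < β₂)
    (φ : A → ℂ) (hφ_state : IsState A φ) (hφ : KMSCondition φ τ1 β₁)
    (ψ : B → ℂ) (hψ_state : IsState B ψ) (hψ : KMSCondition ψ τ2 β₂) :
    ∀ (a c : A) (b d : B), ∃ F : ℂ → ℂ,
      (∃ C : ℝ, ∀ z ∈ closedStrip (min β₁ β₂), ‖F z‖ ≤ C) ∧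
      ContinuousOn F (closedStrip (min β₁ β₂)) ∧
      (∀ z ∈ openStrip (min β₁ β₂), DifferentiableAt ℂ F z) ∧
      (∀ t : ℝ, F (t : ℂ) = φ (a * τ1 t c) * ψ (b * τ2 t d)) := by
  intro a c b d
  obtain ⟨F, ⟨C, hC⟩, hFc, hFd, hF, -⟩ := hφ a c
  obtain ⟨G, ⟨D, hD⟩, hGc, hGd, hG, -⟩ := hψ b d
  have h1 : closedStrip (min β₁ β₂) ⊆ closedStrip β₁ :=
    fun z hz => ⟨hz.1, hz.2.trans (min_le_left _ _)⟩
  have h2 : closedStrip (min β₁ β₂) ⊆ closedStrip β₂ :=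
    fun z hz => ⟨hz.1, hz.2.trans (min_le_right _ _)⟩
  refine ⟨fun z => F z * G z, ⟨C * D, fun z hz => ?_⟩, (hFc.mono h1).mul (hGc.mono h2),
    fun z hz => ?_, fun t => ?_⟩
  · rw [norm_mul]
    exact mul_le_mul (hC z (h1 hz)) (hD z (h2 hz)) (norm_nonneg _)
      ((norm_nonneg _).trans (hC z (h1 hz)))
  · exact (hFd z ⟨hz.1, hz.2.trans_le (min_le_left _ _)⟩).mul
      (hGd z ⟨hz.1, hz.2.trans_le (min_le_right _ _)⟩)
  · simp only [hF, hG]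
end
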